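/- Let G be a finite simple graph on V = {x_1, ..., x_n} with cover ideal J = J(G) ⊆ S = K[x_1, ..., x_n]. The following are equivalent: (1) G is perfect; (2) for all s with 1 ≤ s < χ(G), a monomial prime P = (x_{i_1}, ..., x_{i_r}) is an associated prime of S/J^s if and only if the induced subgraph of G on {x_{i_1}, ..., x_{i_r}} is a clique of size r with 1 < r ≤ s+1; (3) for all s ≥ 1, J^s has the saturated chain property for associated primes. -/

import Mathlib

open MvPolynomial

/-- A finite simple graph on vertex set `Fin n`, presented as a hypergraph all of whose
edges have cardinality exactly two. -/
structure GraphOn (n : ℕ) where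
  edges : Finset (Finset (Fin n))
  card_eq : ∀ e ∈ edges, e.card = 2

/-- `w` is a vertex cover of `G`: it meets every edge. -/
def IsCover {n : ℕ} (G : GraphOn n) (w : Finset (Fin n)) : Prop :=
  ∀ e ∈ G.edges, (w ∩ e).Nonempty

/-- The cover ideal of `G`. -/
noncomputable def coverIdeal {n : ℕ} (K : Type*) [Field K] (G : GraphOn n) :
    Ideal (MvPolynomial (Fin n) K) :=
  Ideal.span {m | ∃ w : Finset (Fin n), IsCover G w ∧ m = ∏ i ∈ w, X i}

/-- `T` is a clique of `G`: any two distinct vertices of `T` are joined by an edge. -/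
def IsClique {n : ℕ} (G : GraphOn n) (T : Finset (Fin n)) : Prop :=
  ∀ u ∈ T, ∀ v ∈ T, u ≠ v → ({u, v} : Finset (Fin n)) ∈ G.edges

/-- The chromatic number of the induced subgraph of `G` on `W`. -/
noncomputable def chromOn {n : ℕ} (G : GraphOn n) (W : Finset (Fin n)) : ℕ :=
  sInf {k | ∃ c : Fin n → ℕ, (∀ i ∈ W, c i < k) ∧
    ∀ e ∈ G.edges, e ⊆ W → ∃ u ∈ e, ∃ v ∈ e, c u ≠ c v}

/-- The clique number of the induced subgraph of `G` on `W`. -/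
noncomputable def cliqueNumOn {n : ℕ} (G : GraphOn n) (W : Finset (Fin n)) : ℕ :=
  sSup {r | ∃ T : Finset (Fin n), T ⊆ W ∧ IsClique G T ∧ T.card = r}

/-- `G` is perfect: for every induced subgraph the chromatic number equals the clique
number. -/
def IsPerfect {n : ℕ} (G : GraphOn n) : Prop :=
  ∀ W : Finset (Fin n), chromOn G W = cliqueNumOn G W

/-- The monomial prime generated by the variables indexed by `R`. -/
noncomputable def varPrime {n : ℕ} (K : Type*) [Field K] (R : Finset (Fin n)) :
    Ideal (MvPolynomial (Fin n) K) :=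
  Ideal.span {p | ∃ i ∈ R, p = X i}

/-- The height of an ideal `P`: the supremum of the lengths of chains of primes lying
below `P`.  For a prime `P` this is the usual height. -/
noncomputable def primeHeight {R : Type*} [CommRing R] (P : Ideal R) : ℕ∞ :=
  ⨆ (c : LTSeries (PrimeSpectrum R)) (_ : c.last.asIdeal ≤ P), (c.length : ℕ∞)

/-- An ideal `I` has the saturated chain property for associated primes: every
non-minimal associated prime `P` of `S/I` admits an associated prime `Q ⊊ P` with
`height Q = height P − 1`. -/
def SaturatedChainProperty {R : Type*} [CommRing R] (I : Ideal R) : Prop :=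
  ∀ P ∈ associatedPrimes R (R ⧸ I), P ∉ I.minimalPrimes →
    ∃ Q ∈ associatedPrimes R (R ⧸ I), Q < P ∧ primeHeight Q + 1 = primeHeight P

/-!
An exponent `m` lies in `J ^ s` exactly when it is bounded below by a sum of `s` vertex covers, that
is, by complementation, when `G` has a multicolouring with `s` colours giving each vertex `i` at
least `s - m i` colours.  So the monomial prime `(x_i : i ∈ R)` is associated to `S / J ^ s` iff
some weight `b ≤ s` supported on `R` is critical: it admits no such multicolouring, but acquires one
once it is lowered at any vertex of `R`.

If `G` is perfect on `R`, then by Lovász's replication argument a weight vanishing outside `R` has a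
multicolouring with `s` colours iff its sum over every clique is at most `s`.  A critical weight
therefore exceeds `s` on a clique, which must contain `R`; so `R` is a clique, and deleting a vertex
of `R` gives the saturated chain.  If `G` is not perfect, let `W` be minimal with `χ(G_W) > ω(G_W)`
and put `s = ω(G_W)`.  The indicator of `W` is critical for `s`, but `W` is not a clique, and the
associated primes strictly below that of `W` come from cliques, which have at most `s < #W - 1`
vertices.
-/

section MonomialIdeal

theorem mem_associatedPrimes_quotient_iff {A : Type*} [CommRing A] [IsNoetherianRing A]
    {I P : Ideal A} :
    P ∈ associatedPrimes A (A ⧸ I) ↔ P.IsPrime ∧ ∃ f, P = I.colon {f} := by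
  have colon_mk (f : A) :
      (⊥ : Submodule A (A ⧸ I)).colon {Ideal.Quotient.mk I f} = I.colon {f} := by
    ext g
    rw [Submodule.mem_colon_singleton, Submodule.mem_colon_singleton, Submodule.mem_bot,
      ← Ideal.Quotient.mk_eq_mk, ← Submodule.Quotient.mk_smul, Submodule.Quotient.mk_eq_zero]
  rw [AssociatedPrimes.mem_iff, isAssociatedPrime_iff]
  simp only [Ideal.Quotient.mk_surjective.exists, colon_mk]

variable {σ R : Type*} [CommRing R]

/-- An ideal of a polynomial ring is monomial if it contains every monomial occurring in one of
its elements; over a field these are the ideals generated by monomials. -/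
def IsMonomialIdeal (I : Ideal (MvPolynomial σ R)) : Prop :=
  ∀ f ∈ I, ∀ m ∈ f.support, monomial m 1 ∈ I

variable {I P : Ideal (MvPolynomial σ R)}

theorem monomial_mem_of_monomial_one_mem {m : σ →₀ ℕ} (c : R) (h : monomial m 1 ∈ I) :
    monomial m c ∈ I := by
  simpa [C_mul_monomial] using I.mul_mem_left (C c) h

theorem mem_of_forall_monomial_mem {f : MvPolynomial σ R}
    (h : ∀ m ∈ f.support, monomial m 1 ∈ I) : f ∈ I := by
  rw [f.as_sum]
  exact sum_mem fun m hm => monomial_mem_of_monomial_one_mem _ (h m hm)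

theorem IsMonomialIdeal.mem_iff (hI : IsMonomialIdeal I) {f : MvPolynomial σ R} :
    f ∈ I ↔ ∀ m ∈ f.support, monomial m 1 ∈ I :=
  ⟨hI f, mem_of_forall_monomial_mem⟩

theorem support_monomial_one_mul (m : σ →₀ ℕ) (f : MvPolynomial σ R) :
    (monomial m 1 * f).support = f.support.map (addLeftEmbedding m) :=
  AddMonoidAlgebra.support_coeff_single_mul f _ (by simp) _

theorem support_sub_monomial_coeff [DecidableEq σ] (f : MvPolynomial σ R) (m : σ →₀ ℕ) :
    (f - monomial m (f.coeff m)).support = f.support.erase m := by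
  ext k
  simp only [mem_support_iff, coeff_sub, coeff_monomial, Finset.mem_erase]
  grind

theorem isMonomialIdeal_of_exists_mem_support
    (h : ∀ f ∈ I, f ≠ 0 → ∃ m ∈ f.support, monomial m 1 ∈ I) : IsMonomialIdeal I := by
  classical
  intro f hf
  induction hs : f.support using Finset.strongInduction generalizing f with
  | H s ih =>
    intro k hk
    subst hs
    obtain ⟨m, hm, hmI⟩ := h f hf (by rintro rfl; simp at hk)
    obtain rfl | hkm := eq_or_ne k m
    · exact hmI
    refine ih _ (Finset.erase_ssubset hm) _
      (I.sub_mem hf (monomial_mem_of_monomial_one_mem _ hmI)) (support_sub_monomial_coeff f m) _ ?_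
    exact Finset.mem_erase.2 ⟨hkm, hk⟩

theorem colon_singleton_mul_of_notMem {A : Type*} [CommRing A] {I P : Ideal A} [hP : P.IsPrime]
    {a f : A} (h : P = I.colon {f}) (ha : a ∉ P) : P = I.colon {a * f} := by
  ext g
  rw [Submodule.mem_colon_singleton, smul_eq_mul, ← mul_assoc, ← smul_eq_mul,
    ← Submodule.mem_colon_singleton, ← h, hP.mul_mem_iff_mem_or_mem]
  simp [ha]

theorem colon_singleton_congr {A : Type*} [CommRing A] {I : Ideal A} {f f' : A}
    (h : f - f' ∈ I) : I.colon {f} = I.colon {f'} := by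
  ext g
  simp only [Submodule.mem_colon_singleton, smul_eq_mul]
  rw [← Ideal.Quotient.mk_eq_mk_iff_sub_mem] at h
  simp only [← Ideal.Quotient.eq_zero_iff_mem, map_mul, h]

-- Among all `f` with `P = I : f` take one with the fewest terms.  If `x^(β+m) ∈ I` for a term
-- `c x^m` of `f` while `x^β ∉ P`, then `x^β (f - c x^m)` is a witness with fewer terms.
theorem exists_colon_eq_and_forall_monomial_mem_iff [P.IsPrime] (hI : IsMonomialIdeal I)
    (h : ∃ f, P = I.colon {f}) :
    ∃ f, P = I.colon {f} ∧ ∀ m ∈ f.support, ∀ β,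
      (monomial β 1 ∈ P ↔ monomial (β + m) 1 ∈ I) := by
  classical
  obtain ⟨f, hf, hmin⟩ := exists_minimalFor_of_wellFoundedLT _ (fun f => f.support.card) h
  refine ⟨f, hf, fun m hm β => ⟨fun hβ => ?_, fun hβm => by_contra fun hβ => ?_⟩⟩
  · rw [hf, Submodule.mem_colon_singleton, smul_eq_mul] at hβ
    refine hI _ hβ _ ?_
    rw [support_monomial_one_mul]
    exact Finset.mem_map_of_mem _ hm
  · set f' := monomial β 1 * (f - monomial m (f.coeff m)) with hf'
    have hcard : f'.support.card < f.support.card := by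
      rw [hf', support_monomial_one_mul, Finset.card_map, support_sub_monomial_coeff]
      exact Finset.card_erase_lt_of_mem hm
    have hcolon : P = I.colon {f'} := by
      rw [colon_singleton_mul_of_notMem hf hβ]
      refine colon_singleton_congr ?_
      rw [hf', ← mul_sub, sub_sub_cancel, monomial_mul, one_mul]
      exact monomial_mem_of_monomial_one_mem _ hβm
    exact hcard.not_ge (hmin hcolon hcard.le)

theorem IsMonomialIdeal.of_isPrime_colon [NoZeroDivisors R] [hP : P.IsPrime]
    (hI : IsMonomialIdeal I) (h : ∃ f, P = I.colon {f}) : IsMonomialIdeal P := by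
  classical
  obtain ⟨f, hf, hmem⟩ := exists_colon_eq_and_forall_monomial_mem_iff hI h
  have hf0 : f ≠ 0 := by
    rintro rfl
    exact hP.ne_top (hf.trans (by simp))
  refine isMonomialIdeal_of_exists_mem_support fun g hg hg0 => ?_
  obtain ⟨γ, hγ⟩ := support_nonempty.2 (mul_ne_zero hg0 hf0)
  obtain ⟨β, hβ, m, hm, rfl⟩ := Finset.mem_add.1 (support_mul g f hγ)
  rw [hf, Submodule.mem_colon_singleton, smul_eq_mul] at hg
  exact ⟨β, hβ, (hmem m hm β).2 (hI _ hg _ hγ)⟩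

theorem IsMonomialIdeal.exists_eq_colon_monomial [NoZeroDivisors R] [hP : P.IsPrime]
    (hI : IsMonomialIdeal I) (h : ∃ f, P = I.colon {f}) : ∃ m, P = I.colon {monomial m 1} := by
  obtain ⟨f, hf, hmem⟩ := exists_colon_eq_and_forall_monomial_mem_iff hI h
  obtain ⟨m, hm⟩ : f.support.Nonempty := by
    refine support_nonempty.2 ?_
    rintro rfl
    exact hP.ne_top (hf.trans (by simp))
  refine ⟨m, ?_⟩
  ext g
  rw [(hI.of_isPrime_colon h).mem_iff, Submodule.mem_colon_singleton, smul_eq_mul, mul_comm,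
    hI.mem_iff, support_monomial_one_mul, Finset.forall_mem_map]
  simp only [hmem m hm, addLeftEmbedding_apply, add_comm m]

theorem monomial_one_mem_iff_exists_X_mem [hP : P.IsPrime] {m : σ →₀ ℕ} :
    monomial m 1 ∈ P ↔ ∃ i, X i ∈ P ∧ m i ≠ 0 := by
  rw [monomial_eq, C_1, one_mul, Finsupp.prod, hP.prod_mem_iff]
  constructor
  · rintro ⟨i, hi, h⟩
    exact ⟨i, hP.mem_of_pow_mem _ h, Finsupp.mem_support_iff.1 hi⟩
  · rintro ⟨i, h, hi⟩
    exact ⟨i, Finsupp.mem_support_iff.2 hi, P.pow_mem_of_mem h _ (Nat.pos_of_ne_zero hi)⟩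

theorem IsMonomialIdeal.eq_span_X_image [P.IsPrime] (hP : IsMonomialIdeal P) :
    P = Ideal.span (X '' {i | X i ∈ P}) := by
  ext f
  rw [hP.mem_iff, mem_ideal_span_X_image]
  simp only [monomial_one_mem_iff_exists_X_mem, Set.mem_ofPred_eq]

end MonomialIdeal

section SpanX

variable {σ R : Type*} [CommRing R]

theorem span_X_image_le_iff {s : Set σ} {I : Ideal (MvPolynomial σ R)} :
    Ideal.span (X '' s) ≤ I ↔ ∀ i ∈ s, X i ∈ I := by
  rw [Ideal.span_le, Set.image_subset_iff]
  rfl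

theorem monomial_one_mem_span_X_image_iff [Nontrivial R] {s : Set σ} {m : σ →₀ ℕ} :
    monomial m (1 : R) ∈ Ideal.span (X '' s) ↔ ∃ i ∈ s, m i ≠ 0 := by
  classical
  simp [mem_ideal_span_X_image, support_monomial]

theorem X_mem_span_X_image_iff [Nontrivial R] {s : Set σ} {i : σ} :
    (X i : MvPolynomial σ R) ∈ Ideal.span (X '' s) ↔ i ∈ s := by
  classical
  simp [X, monomial_one_mem_span_X_image_iff, Finsupp.single_apply]

theorem span_X_image_le_span_X_image_iff [Nontrivial R] {s t : Set σ} :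
    Ideal.span (X '' s : Set (MvPolynomial σ R)) ≤ Ideal.span (X '' t) ↔ s ⊆ t := by
  simp only [span_X_image_le_iff, X_mem_span_X_image_iff, Set.subset_def]

theorem span_X_image_lt_span_X_image_iff [Nontrivial R] {s t : Set σ} :
    Ideal.span (X '' s : Set (MvPolynomial σ R)) < Ideal.span (X '' t) ↔ s ⊂ t := by
  simp only [lt_iff_le_not_ge, span_X_image_le_span_X_image_iff]

open Classical in
theorem ker_aeval_ite_X (s : Set σ) :
    RingHom.ker (aeval fun i => if i ∈ s then 0 else X i :
      MvPolynomial σ R →ₐ[R] MvPolynomial σ R) = Ideal.span (X '' s) := by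
  set φ : MvPolynomial σ R →ₐ[R] MvPolynomial σ R := aeval fun i => if i ∈ s then 0 else X i
  have hφ : (Ideal.Quotient.mkₐ R (Ideal.span (X '' s))).comp φ =
      Ideal.Quotient.mkₐ R (Ideal.span (X '' s)) := by
    ext i
    by_cases hi : i ∈ s
    · simpa [φ, hi, eq_comm] using
        Ideal.Quotient.eq_zero_iff_mem.2 (Ideal.subset_span (Set.mem_image_of_mem X hi))
    · simp [φ, hi]
  refine le_antisymm (fun f hf => ?_) (span_X_image_le_iff.2 fun i hi => by simp [φ, hi])
  rw [← Ideal.Quotient.eq_zero_iff_mem]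
  simpa [RingHom.mem_ker.1 hf, eq_comm] using DFunLike.congr_fun hφ f

theorem isPrime_span_X_image [IsDomain R] (s : Set σ) :
    (Ideal.span (X '' s : Set (MvPolynomial σ R))).IsPrime := by
  classical
  rw [← ker_aeval_ite_X]
  exact RingHom.ker_isPrime _

theorem card_le_height_span_X_image [IsDomain R] (s : Finset σ) :
    (s.card : ℕ∞) ≤ (Ideal.span (X '' s : Set (MvPolynomial σ R))).height := by
  classical
  induction s using Finset.induction_on with
  | empty => simp
  | insert i s hi ih =>
    have := isPrime_span_X_image (R := R) (s : Set σ)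
    have := isPrime_span_X_image (R := R) ((insert i s : Finset σ) : Set σ)
    rw [Finset.card_insert_of_notMem hi, Nat.cast_add, Nat.cast_one]
    exact (add_le_add_left ih 1).trans <| Ideal.height_add_one_le_of_lt_of_isPrime <|
      span_X_image_lt_span_X_image_iff.2 <| Finset.coe_ssubset.2 <| Finset.ssubset_insert hi

theorem height_span_X_image [IsDomain R] [IsNoetherianRing R] [Finite σ] (s : Finset σ) :
    (Ideal.span (X '' s : Set (MvPolynomial σ R))).height = s.card := by
  classical
  refine le_antisymm ?_ (card_le_height_span_X_image s)
  have := isPrime_span_X_image (R := R) (s : Set σ)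
  refine (Ideal.height_le_card_of_mem_minimalPrimes_span_finset (s := s.image X) ?_).trans
    (Nat.cast_le.2 Finset.card_image_le)
  rw [Finset.coe_image, Ideal.minimalPrimes_eq_subsingleton_self]
  rfl

end SpanX

section VarPrime

variable {n : ℕ} {K : Type*} [Field K] {R R' : Finset (Fin n)}

theorem varPrime_eq_span_X_image (R : Finset (Fin n)) :
    varPrime K R = Ideal.span (X '' (R : Set (Fin n))) := by
  simp only [varPrime, Set.image, Finset.mem_coe, eq_comm]

instance isPrime_varPrime (R : Finset (Fin n)) : (varPrime K R).IsPrime :=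
  varPrime_eq_span_X_image (K := K) R ▸ isPrime_span_X_image _

theorem varPrime_le_varPrime_iff : varPrime K R ≤ varPrime K R' ↔ R ⊆ R' := by
  simp only [varPrime_eq_span_X_image, span_X_image_le_span_X_image_iff, Finset.coe_subset]

theorem varPrime_lt_varPrime_iff : varPrime K R < varPrime K R' ↔ R ⊂ R' := by
  simp only [varPrime_eq_span_X_image, span_X_image_lt_span_X_image_iff, Finset.coe_ssubset]

theorem primeHeight_eq_height {A : Type*} [CommRing A] (P : Ideal A) [hP : P.IsPrime] :
    primeHeight P = P.height :=
  (PrimeSpectrum.height_eq_orderHeight ⟨P, hP⟩).symm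

theorem primeHeight_varPrime (R : Finset (Fin n)) : primeHeight (varPrime K R) = R.card := by
  rw [primeHeight_eq_height, varPrime_eq_span_X_image, height_span_X_image]

end VarPrime

section MultiColoring

variable {V : Type*} {G : SimpleGraph V} {b b' : V → ℕ} {k k' : ℕ}

/-- A multicolouring of `G` with weights `b` and `k` colours gives each vertex `v` a set of at
least `b v` colours, adjacent vertices receiving disjoint sets.  Equivalently, the blow-up of `G`
replacing each `v` by `b v` pairwise adjacent copies is `k`-colourable. -/
def MultiColorable (G : SimpleGraph V) (b : V → ℕ) (k : ℕ) : Prop :=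
  ∃ c : V → Finset (Fin k), (∀ u v, G.Adj u v → Disjoint (c u) (c v)) ∧ ∀ v, b v ≤ (c v).card

theorem multiColorable_of_card_le {ι : Type*} [Fintype ι] (hk : Fintype.card ι ≤ k)
    (c : V → Finset ι) (hc : ∀ u v, G.Adj u v → Disjoint (c u) (c v))
    (hb : ∀ v, b v ≤ (c v).card) : MultiColorable G b k := by
  obtain ⟨f⟩ : Nonempty (ι ↪ Fin k) := Function.Embedding.nonempty_of_card_le (by simpa using hk)
  exact ⟨fun v => (c v).map f, fun u v huv => (Finset.disjoint_map f).2 (hc u v huv),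
    fun v => by simpa using hb v⟩

theorem MultiColorable.mono (h : MultiColorable G b k) (hb : b' ≤ b) (hk : k ≤ k') :
    MultiColorable G b' k' := by
  obtain ⟨c, hc, hcb⟩ := h
  exact multiColorable_of_card_le (by simpa using hk) c hc fun v => (hb v).trans (hcb v)

theorem MultiColorable.sum_le_of_isClique (h : MultiColorable G b k) {T : Finset V}
    (hT : G.IsClique T) : ∑ v ∈ T, b v ≤ k := by
  classical
  obtain ⟨c, hc, hcb⟩ := h
  calc ∑ v ∈ T, b v ≤ ∑ v ∈ T, (c v).card := Finset.sum_le_sum fun v _ => hcb v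
    _ = (T.biUnion c).card :=
      (Finset.card_biUnion fun u hu v hv huv => hc u v (hT hu hv huv)).symm
    _ ≤ k := by simpa using Finset.card_le_univ (T.biUnion c)

theorem multiColorable_sum [Fintype V] (G : SimpleGraph V) (b : V → ℕ) :
    MultiColorable G b (∑ v, b v) := by
  refine multiColorable_of_card_le (ι := Σ v, Fin (b v)) (by simp)
    (fun v => Finset.univ.map (Function.Embedding.sigmaMk v)) (fun u v huv => ?_) (by simp)
  rw [Finset.disjoint_left]
  simp only [Finset.mem_map, Finset.mem_univ, true_and, not_exists]
  rintro _ ⟨i, rfl⟩ j hj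
  exact huv.ne (congrArg Sigma.fst hj).symm

theorem MultiColorable.add_indicator (h : MultiColorable G b k) {S : Set V}
    (hS : G.IsIndepSet S) : MultiColorable G (b + S.indicator 1) (k + 1) := by
  classical
  obtain ⟨c, hc, hcb⟩ := h
  refine multiColorable_of_card_le (ι := Fin k ⊕ Unit) (by simp)
    (fun v => (c v).disjSum (if v ∈ S then Finset.univ else ∅)) (fun u v huv => ?_) fun v => ?_
  · rw [Finset.disjoint_left]
    rintro (i | _) <;> simp only [Finset.inl_mem_disjSum, Finset.inr_mem_disjSum]
    · exact fun hu => Finset.disjoint_left.1 (hc u v huv) hu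
    · have : u ∈ S → v ∉ S := fun hu hv => hS hu hv huv.ne huv
      grind
  · have := hcb v
    by_cases hv : v ∈ S <;> simp [hv, this]

theorem multiColorable_sub_indicator {c : V → Finset (Fin (k + 1))}
    (hc : ∀ u v, G.Adj u v → Disjoint (c u) (c v)) (hcb : ∀ v, b v ≤ (c v).card)
    (j : Fin (k + 1)) : MultiColorable G (b - {v | j ∈ c v}.indicator 1) k := by
  classical
  refine multiColorable_of_card_le (ι := {i // i ≠ j}) (by simp [Fintype.card_subtype_compl])
    (fun v => (c v).subtype (· ≠ j)) (fun u v huv => ?_) fun v => ?_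
  · rw [Finset.disjoint_left]
    have := Finset.disjoint_left.1 (hc u v huv)
    grind
  · have := hcb v
    simp only [Finset.card_subtype, Finset.filter_ne', Finset.card_erase_eq_ite, Pi.sub_apply,
      Set.indicator_apply, Set.mem_ofPred_eq, Pi.one_apply]
    split_ifs <;> omega

theorem colorable_induce_iff_multiColorable {W : Set V} :
    (G.induce W).Colorable k ↔ MultiColorable G (W.indicator 1) k := by
  classical
  constructor
  · rintro ⟨C⟩
    refine ⟨fun v => if h : v ∈ W then {C ⟨v, h⟩} else ∅, fun u v huv => ?_, fun v => ?_⟩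
    · dsimp only
      split_ifs with hu hv
      · exact Finset.disjoint_singleton.2 (C.valid (SimpleGraph.comap_adj.2 huv))
      all_goals simp
    · by_cases hv : v ∈ W <;> simp [hv]
  · rintro ⟨c, hc, hcW⟩
    have hne (v : W) : (c v).Nonempty :=
      Finset.one_le_card.1 (by simpa only [Set.indicator_of_mem v.2, Pi.one_apply] using hcW v)
    choose C hC using hne
    exact ⟨SimpleGraph.Coloring.mk C fun {u v} huv h =>
      Finset.disjoint_left.1 (hc u v huv) (hC u) (h ▸ hC v)⟩

end MultiColoring

section WeaklyPerfect

variable {V : Type*} {G : SimpleGraph V} {R T W : Finset V}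

/-- `G` is weakly perfect on `W` if the chromatic number and the clique number of the subgraph
induced on `W` agree; only the nontrivial inequality is recorded. -/
def IsWeaklyPerfectOn (G : SimpleGraph V) (W : Finset V) : Prop :=
  (G.induce (W : Set V)).Colorable (G.induce (W : Set V)).cliqueNum

/-- `G` is perfect on `R` if the subgraph induced on `R` is a perfect graph. -/
def IsPerfectOn (G : SimpleGraph V) (R : Finset V) : Prop :=
  ∀ W ⊆ R, IsWeaklyPerfectOn G W

theorem IsPerfectOn.mono (hW : IsPerfectOn G W) (hRW : R ⊆ W) : IsPerfectOn G R :=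
  fun _ h => hW _ (h.trans hRW)

theorem card_le_cliqueNum_induce (hTW : T ⊆ W) (hT : G.IsClique T) :
    T.card ≤ (G.induce (W : Set V)).cliqueNum := by
  classical
  have hT' : (T.subtype (· ∈ (W : Set V))).map (.subtype _) = T :=
    Finset.subtype_map_of_mem fun v hv => hTW hv
  have : (G.induce (W : Set V)).IsNClique T.card (T.subtype (· ∈ (W : Set V))) := by
    rw [SimpleGraph.isNClique_induce_iff, hT', SimpleGraph.isNClique_iff]
    exact ⟨hT, rfl⟩
  exact this.card_eq ▸ this.isClique.card_le_cliqueNum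

theorem exists_isClique_card_eq_cliqueNum_induce (G : SimpleGraph V) (W : Finset V) :
    ∃ T ⊆ W, G.IsClique T ∧ T.card = (G.induce (W : Set V)).cliqueNum := by
  obtain ⟨T, hT⟩ := (G.induce (W : Set V)).exists_isNClique_cliqueNum
  rw [SimpleGraph.isNClique_induce_iff] at hT
  refine ⟨_, fun v hv => ?_, hT.isClique, hT.card_eq⟩
  obtain ⟨w, -, rfl⟩ := Finset.mem_map.1 hv
  exact w.2

theorem cliqueNum_induce_mono (h : R ⊆ W) :
    (G.induce (R : Set V)).cliqueNum ≤ (G.induce (W : Set V)).cliqueNum := by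
  obtain ⟨T, hTR, hT, hcard⟩ := exists_isClique_card_eq_cliqueNum_induce G R
  exact hcard ▸ card_le_cliqueNum_induce (hTR.trans h) hT

theorem colorable_card_sub_one [Fintype V] (hG : G ≠ ⊤) : G.Colorable (Fintype.card V - 1) := by
  have hlt : G.chromaticNumber < Fintype.card V :=
    lt_of_le_of_ne G.chromaticNumber_le_card (mt SimpleGraph.eq_top_of_chromaticNumber_eq_card hG)
  obtain ⟨m, hm⟩ := ENat.ne_top_iff_exists.1 hlt.ne_top
  rw [← hm, Nat.cast_lt] at hlt
  exact SimpleGraph.chromaticNumber_le_iff_colorable.1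
    (hm ▸ Nat.cast_le.2 (Nat.le_sub_one_of_lt hlt))

theorem isWeaklyPerfectOn_of_isClique (hW : G.IsClique W) : IsWeaklyPerfectOn G W := by
  refine (G.induce (W : Set V)).colorable_of_fintype.mono ?_
  simpa using card_le_cliqueNum_induce subset_rfl hW

end WeaklyPerfect

section Replication

variable {V : Type*} {G : SimpleGraph V} {b : V → ℕ} {k : ℕ} {R T : Finset V}

theorem IsPerfectOn.multiColorable_of_le_one (hG : IsPerfectOn G R) (hb : b ≤ 1)
    (hbR : ∀ v ∉ R, b v = 0) (hk : ∀ T : Finset V, G.IsClique T → ∑ v ∈ T, b v ≤ k) :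
    MultiColorable G b k := by
  classical
  let W := R.filter (b · ≠ 0)
  have hbW : b = (W : Set V).indicator 1 := by
    ext v
    have hbv : b v ≤ 1 := hb v
    have := hbR v
    simp only [Set.indicator_apply, Pi.one_apply, W, Finset.mem_coe, Finset.mem_filter]
    grind
  rw [hbW, ← colorable_induce_iff_multiColorable]
  refine (hG W (Finset.filter_subset _ _)).mono ?_
  obtain ⟨T, hTW, hT, hcard⟩ := exists_isClique_card_eq_cliqueNum_induce G W
  calc _ = ∑ v ∈ T, 1 := by rw [← hcard, Finset.card_eq_sum_ones]
    _ = ∑ v ∈ T, b v := Finset.sum_congr rfl fun v hv => by simp [hbW, hTW hv]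
    _ ≤ k := hk T hT

theorem sum_sub_indicator_colorClass_le [DecidableEq V] {v : V} (hv : b v ≠ 0)
    {c : V → Finset (Fin (k + 1))} (hc : ∀ u w, G.Adj u w → Disjoint (c u) (c w))
    (hcb : ∀ w, (b - Pi.single v 1 : V → ℕ) w ≤ (c w).card) {j : Fin (k + 1)} (hj : j ∈ c v)
    (hT : G.IsClique T) (hTk : ∑ w ∈ T, b w ≤ k + 1) :
    ∑ w ∈ T, (b - {w | j ∈ c w}.indicator 1 : V → ℕ) w ≤ k := by
  by_cases hvT : v ∈ T
  · refine Nat.le_of_lt_succ (lt_of_lt_of_le ?_ hTk)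
    refine Finset.sum_lt_sum (fun w _ => Nat.sub_le _ _) ⟨v, hvT, ?_⟩
    simpa [hj] using Nat.pos_of_ne_zero hv
  · refine le_of_eq_of_le (Finset.sum_congr rfl fun w hw => ?_)
      ((multiColorable_sub_indicator hc hcb j).sum_le_of_isClique hT)
    simp [ne_of_mem_of_not_mem hw hvT]

-- If `b v ≥ 2`, colour `b - e_v` inductively and remove from `b` the colour class `S` of a colour
-- used at `v`.  A clique `T` through `v` loses one unit of weight; any other clique has the same
-- weight in `b - 1_S` as in `b - e_v - 1_S`, which is coloured by the remaining colours.
theorem IsPerfectOn.multiColorable_of_forall_sum_le [Finite V] (hG : IsPerfectOn G R)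
    (hbR : ∀ v ∉ R, b v = 0) (hk : ∀ T : Finset V, G.IsClique T → ∑ v ∈ T, b v ≤ k) :
    MultiColorable G b k := by
  classical
  induction b using WellFoundedLT.induction generalizing k with
  | ind b ih =>
    by_cases hb : b ≤ 1
    · exact hG.multiColorable_of_le_one hb hbR hk
    obtain ⟨v, hv⟩ : ∃ v, 1 < b v := by simpa [Pi.le_def] using hb
    obtain ⟨k, rfl⟩ : ∃ l, k = l + 1 := by
      have := hk {v} (by simp)
      rw [Finset.sum_singleton] at this
      exact Nat.exists_eq_add_of_le' (by omega)
    have ih_sub (d : V → ℕ) (hd : d v ≠ 0) {l} := ih (b - d) (k := l)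
      (Pi.lt_def.2 ⟨fun w => Nat.sub_le _ _, v, Nat.sub_lt (by omega) (Nat.pos_of_ne_zero hd)⟩)
      fun w hw => by simp [hbR w hw]
    obtain ⟨c, hc, hcb⟩ := ih_sub (Pi.single v 1) (by simp) fun T hT =>
      (Finset.sum_le_sum fun w _ => Nat.sub_le _ _).trans (hk T hT)
    obtain ⟨j, hj⟩ : (c v).Nonempty := Finset.card_pos.1 <| by
      have := hcb v
      simp only [Pi.sub_apply, Pi.single_eq_same] at this
      omega
    let S : Set V := {w | j ∈ c w}
    have hS : G.IsIndepSet S := fun u hu w hw _ huw => Finset.disjoint_left.1 (hc u w huw) hu hw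
    have hbS : MultiColorable G (b - S.indicator 1) k := ih_sub _ (by simp [S, hj]) fun T hT =>
      sum_sub_indicator_colorClass_le (by omega) hc hcb hj hT (hk T hT)
    exact (hbS.add_indicator hS).mono (fun w => le_tsub_add) le_rfl

end Replication

section CriticalWeight

variable {V : Type*} [DecidableEq V] {G : SimpleGraph V} {b : V → ℕ} {s : ℕ} {R T : Finset V}

/-- A weight `b ≤ s` supported in `R` is critical for `s` if `G` has no multicolouring with
weights `b` and `s` colours, but acquires one as soon as `b` is lowered at any vertex of `R`.
These weights encode the critically `(s + 1)`-chromatic induced subgraphs of the `s`-th expansion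
of `G`, by which Francisco, Hà and Van Tuyl describe the associated primes of `S / J(G) ^ s`. -/
structure IsCriticalWeight (G : SimpleGraph V) (s : ℕ) (R : Finset V) (b : V → ℕ) : Prop where
  le : ∀ v, b v ≤ s
  eq_zero : ∀ v ∉ R, b v = 0
  not_multiColorable : ¬ MultiColorable G b s
  multiColorable_sub : ∀ v ∈ R, MultiColorable G (b - Pi.single v 1) s

theorem IsCriticalWeight.ne_zero (h : IsCriticalWeight G s R b) {v : V} (hv : v ∈ R) :
    b v ≠ 0 := by
  intro hbv
  refine h.not_multiColorable ((h.multiColorable_sub v hv).mono (fun w => ?_) le_rfl)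
  obtain rfl | hwv := eq_or_ne w v
  · simp [hbv]
  · simp [hwv]

theorem IsCriticalWeight.subset_of_lt_sum (h : IsCriticalWeight G s R b) (hT : G.IsClique T)
    (hsum : s < ∑ v ∈ T, b v) : R ⊆ T := by
  refine fun v hv => by_contra fun hvT => hsum.not_ge ?_
  refine le_of_eq_of_le (Finset.sum_congr rfl fun w hw => ?_)
    ((h.multiColorable_sub v hv).sum_le_of_isClique hT)
  simp [ne_of_mem_of_not_mem hw hvT]

theorem IsCriticalWeight.exists_isClique_lt_sum [Finite V] (h : IsCriticalWeight G s R b)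
    (hG : IsPerfectOn G R) : ∃ T : Finset V, G.IsClique T ∧ s < ∑ v ∈ T, b v := by
  by_contra! hle
  exact h.not_multiColorable (hG.multiColorable_of_forall_sum_le h.eq_zero hle)

theorem IsCriticalWeight.isClique_and_card [Finite V] (h : IsCriticalWeight G s R b)
    (hG : IsPerfectOn G R) : 1 < R.card ∧ R.card ≤ s + 1 ∧ G.IsClique R := by
  obtain ⟨T, hT, hsum⟩ := h.exists_isClique_lt_sum hG
  have hRT := h.subset_of_lt_sum hT hsum
  have hR : G.IsClique R := hT.subset hRT
  replace hsum : s < ∑ v ∈ R, b v := by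
    rwa [Finset.sum_subset hRT fun v _ hv => h.eq_zero v hv]
  have hcard : 1 < R.card := by
    by_contra! hR1
    exact hsum.not_ge <| calc
      ∑ v ∈ R, b v ≤ R.card * s := Finset.sum_le_card_nsmul R b s fun v _ => h.le v
      _ ≤ s := by nlinarith
  refine ⟨hcard, ?_, hR⟩
  obtain ⟨v, hv⟩ := Finset.card_pos.1 (zero_lt_one.trans hcard)
  calc R.card = ((R.erase v).card) + 1 := (Finset.card_erase_add_one hv).symm
    _ ≤ ∑ w ∈ R, (b - Pi.single v 1 : V → ℕ) w + 1 := ?_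
    _ ≤ s + 1 := Nat.succ_le_succ ((h.multiColorable_sub v hv).sum_le_of_isClique hR)
  rw [← Finset.add_sum_erase R _ hv, Finset.card_eq_sum_ones]
  refine Nat.succ_le_succ (le_add_left (Finset.sum_le_sum fun w hw => ?_))
  simpa [Finset.ne_of_mem_erase hw] using
    Nat.one_le_iff_ne_zero.2 (h.ne_zero (Finset.mem_of_mem_erase hw))

theorem exists_isCriticalWeight_of_isClique [Finite V] (hR : G.IsClique R) (h1 : 1 < R.card)
    (hs : R.card ≤ s + 1) : ∃ b, IsCriticalWeight G s R b := by
  have := Fintype.ofFinite V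
  obtain ⟨v, hv⟩ := Finset.card_pos.1 (zero_lt_one.trans h1)
  let b : V → ℕ := (R : Set V).indicator 1 + Pi.single v (s + 1 - R.card)
  have hb0 : ∀ w ∉ R, b w = 0 := fun w hw => by
    simp [b, hw, (ne_of_mem_of_not_mem hv hw).symm]
  have hb1 : ∀ w ∈ R, 1 ≤ b w := fun w hw => by simp [b, hw]
  have hsum : ∑ w ∈ R, b w = s + 1 := by
    simp only [b, Pi.add_apply, Finset.sum_add_distrib, Finset.sum_pi_single', hv, if_true]
    rw [Finset.sum_congr rfl fun w hw => Set.indicator_of_mem (Finset.mem_coe.2 hw) 1]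
    simp [hs]
  refine ⟨b, fun w => ?_, hb0, fun h => ?_, fun w hw => ?_⟩
  · simp only [b, Pi.add_apply, Set.indicator_apply, Pi.single_apply, Pi.one_apply]
    grind
  · have := h.sum_le_of_isClique hR
    omega
  · refine (multiColorable_sum G (b - Pi.single w 1)).mono le_rfl (Nat.le_of_lt_succ ?_)
    rw [Nat.succ_eq_add_one, ← hsum, Finset.sum_subset R.subset_univ fun v _ hv => hb0 v hv]
    refine Finset.sum_lt_sum (fun _ _ => Nat.sub_le _ _) ⟨w, Finset.mem_univ w, ?_⟩
    simpa using Nat.succ_le_iff.1 (hb1 w hw)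

theorem exists_isCriticalWeight_iff [Finite V] (hG : IsPerfectOn G R) :
    (∃ b, IsCriticalWeight G s R b) ↔ 1 < R.card ∧ R.card ≤ s + 1 ∧ G.IsClique R :=
  ⟨fun ⟨_, hb⟩ => hb.isClique_and_card hG,
    fun ⟨h1, hs, hR⟩ => exists_isCriticalWeight_of_isClique hR h1 hs⟩

theorem isCriticalWeight_of_forall_multiColorable_iff {a : V → ℕ}
    (h : ∀ β : V → ℕ, (∃ v ∈ R, β v ≠ 0) ↔ MultiColorable G (fun v => s - (β v + a v)) s) :
    IsCriticalWeight G s R fun v => if v ∈ R then s - a v else 0 where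
  le v := by split_ifs <;> omega
  eq_zero v hv := if_neg hv
  not_multiColorable hcol := by
    obtain ⟨v, hv, hne⟩ := (h fun v => if v ∈ R then 0 else s).2 <|
      hcol.mono (fun v => by dsimp only; split_ifs <;> omega) le_rfl
    exact hne (if_pos hv)
  multiColorable_sub v hv := by
    refine ((h (Pi.single v 1)).1 ⟨v, hv, by simp⟩).mono (fun w => ?_) le_rfl
    simp only [Pi.sub_apply]
    split_ifs <;> omega

theorem IsCriticalWeight.exists_ne_zero_iff (h : IsCriticalWeight G s R b) (β : V → ℕ) :
    (∃ v ∈ R, β v ≠ 0) ↔ MultiColorable G (fun v => s - (β v + (s - b v))) s := by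
  constructor
  · rintro ⟨v, hv, hβ⟩
    refine (h.multiColorable_sub v hv).mono (fun w => ?_) le_rfl
    have := h.le w
    simp only [Pi.sub_apply, Pi.single_apply]
    grind
  · intro hcol
    by_contra! hβ
    refine h.not_multiColorable (hcol.mono (fun v => ?_) le_rfl)
    dsimp only
    by_cases hv : v ∈ R
    · have := h.le v
      rw [hβ v hv]
      omega
    · exact (h.eq_zero v hv).trans_le (Nat.zero_le _)

end CriticalWeight

section MinimalImperfect

variable {V : Type*} {G : SimpleGraph V} {W : Finset V}

theorem exists_minimal_not_isWeaklyPerfectOn {R : Finset V} (h : ¬ IsPerfectOn G R) :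
    ∃ W, Minimal (¬ IsWeaklyPerfectOn G ·) W := by
  simp only [IsPerfectOn, not_forall] at h
  obtain ⟨W, -, hW⟩ := h
  exact exists_minimal_of_wellFoundedLT _ ⟨W, hW⟩

theorem isPerfectOn_of_ssubset_minimal (hW : Minimal (¬ IsWeaklyPerfectOn G ·) W)
    {R : Finset V} (hR : R ⊂ W) : IsPerfectOn G R := fun _ h =>
  not_not.1 (hW.not_prop_of_lt (h.trans_ssubset hR))

theorem not_isClique_of_minimal (hW : Minimal (¬ IsWeaklyPerfectOn G ·) W) : ¬ G.IsClique W :=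
  fun h => hW.prop (isWeaklyPerfectOn_of_isClique h)

theorem cliqueNum_add_one_lt_card_of_minimal (hW : Minimal (¬ IsWeaklyPerfectOn G ·) W) :
    (G.induce (W : Set V)).cliqueNum + 1 < W.card := by
  by_contra! hcard
  have hW' : G.induce (W : Set V) ≠ ⊤ := mt SimpleGraph.induce_eq_top.1 (not_isClique_of_minimal hW)
  refine hW.prop ((colorable_card_sub_one hW').mono ?_)
  simpa using hcard

theorem one_le_cliqueNum_of_minimal (hW : Minimal (¬ IsWeaklyPerfectOn G ·) W) :
    1 ≤ (G.induce (W : Set V)).cliqueNum := by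
  obtain ⟨v, hv⟩ : W.Nonempty := by
    rw [Finset.nonempty_iff_ne_empty]
    rintro rfl
    exact not_isClique_of_minimal hW (by simp)
  simpa using card_le_cliqueNum_induce (T := {v}) (Finset.singleton_subset_iff.2 hv)
    (by simp)

theorem isCriticalWeight_indicator_of_minimal [DecidableEq V]
    (hW : Minimal (¬ IsWeaklyPerfectOn G ·) W) :
    IsCriticalWeight G (G.induce (W : Set V)).cliqueNum W ((W : Set V).indicator 1) where
  le v := (Set.indicator_le_self' (by simp) v).trans (one_le_cliqueNum_of_minimal hW)
  eq_zero v hv := Set.indicator_of_notMem hv _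
  not_multiColorable h := hW.prop (colorable_induce_iff_multiColorable.2 h)
  multiColorable_sub v hv := by
    have hlt := Finset.erase_ssubset hv
    have := isPerfectOn_of_ssubset_minimal hW hlt _ subset_rfl
    refine (colorable_induce_iff_multiColorable.1 this).mono (fun w => ?_)
      (cliqueNum_induce_mono hlt.subset)
    simp only [Pi.sub_apply, Set.indicator_apply, Pi.one_apply, Pi.single_apply,
      Finset.mem_coe, Finset.mem_erase]
    grind

end MinimalImperfect

section ToSimpleGraph

variable {n : ℕ} {G : GraphOn n} {k : ℕ} {W T : Finset (Fin n)}

/-- The graph `G` as a Mathlib graph; it makes colourings and cliques from the library available. -/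
def GraphOn.toSimpleGraph (G : GraphOn n) : SimpleGraph (Fin n) where
  Adj u v := u ≠ v ∧ {u, v} ∈ G.edges
  symm := ⟨fun u v h => ⟨h.1.symm, Finset.pair_comm u v ▸ h.2⟩⟩
  loopless := ⟨fun _ h => h.1 rfl⟩

theorem GraphOn.forall_edge_iff {p : Finset (Fin n) → Prop} :
    (∀ e ∈ G.edges, p e) ↔ ∀ u v, G.toSimpleGraph.Adj u v → p {u, v} := by
  refine ⟨fun h u v huv => h _ huv.2, fun h e he => ?_⟩
  obtain ⟨u, v, huv, rfl⟩ := Finset.card_eq_two.1 (G.card_eq e he)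
  exact h u v ⟨huv, he⟩

theorem isClique_toSimpleGraph : G.toSimpleGraph.IsClique T ↔ IsClique G T := by
  refine forall₂_congr fun u _ => forall₂_congr fun v _ => forall_congr' fun huv => ?_
  exact and_iff_right huv

theorem isVertexCover_toSimpleGraph :
    G.toSimpleGraph.IsVertexCover W ↔ IsCover G W := by
  rw [IsCover, GraphOn.forall_edge_iff]
  refine forall₂_congr fun u v => forall_congr' fun _ => ?_
  simp only [Finset.Nonempty, Finset.mem_inter, Finset.mem_insert, Finset.mem_singleton,
    Finset.mem_coe]
  grind

theorem mem_edges_iff_card_eq_two_and_isClique :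
    T ∈ G.edges ↔ T.card = 2 ∧ IsClique G T := by
  constructor
  · intro hT
    refine ⟨G.card_eq T hT, fun u hu v hv huv => ?_⟩
    have hsub : {u, v} ⊆ T := Finset.insert_subset hu (Finset.singleton_subset_iff.2 hv)
    rwa [Finset.eq_of_subset_of_card_le hsub (by rw [G.card_eq T hT, Finset.card_pair huv])]
  · rintro ⟨hcard, hT⟩
    obtain ⟨u, v, huv, rfl⟩ := Finset.card_eq_two.1 hcard
    exact hT u (by simp) v (by simp) huv

theorem exists_nat_coloring_iff_colorable :
    (∃ c : Fin n → ℕ, (∀ i ∈ W, c i < k) ∧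
      ∀ e ∈ G.edges, e ⊆ W → ∃ u ∈ e, ∃ v ∈ e, c u ≠ c v) ↔
    (G.toSimpleGraph.induce (W : Set (Fin n))).Colorable k := by
  classical
  have hedge (c : Fin n → ℕ) (u v : Fin n) :
      (({u, v} : Finset (Fin n)) ⊆ W → ∃ x ∈ ({u, v} : Finset (Fin n)),
        ∃ y ∈ ({u, v} : Finset (Fin n)), c x ≠ c y) ↔ (u ∈ W → v ∈ W → c u ≠ c v) := by
    simp only [Finset.insert_subset_iff, Finset.singleton_subset_iff, Finset.mem_insert,
      Finset.mem_singleton]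
    grind
  simp only [GraphOn.forall_edge_iff, hedge, SimpleGraph.colorable_iff_exists_bdd_nat_coloring]
  constructor
  · rintro ⟨c, hcW, hc⟩
    exact ⟨SimpleGraph.Coloring.mk (fun v => c v) fun {u v} huv => hc u v huv u.2 v.2,
      fun v => hcW v v.2⟩
  · rintro ⟨C, hC⟩
    refine ⟨fun v => if hv : v ∈ W then C ⟨v, hv⟩ else 0, fun v hv => ?_, fun u v huv hu hv => ?_⟩
    · simpa [hv] using hC ⟨v, hv⟩
    · simpa [hu, hv] using C.valid (v := ⟨u, hu⟩) (w := ⟨v, hv⟩) huv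

theorem chromOn_le_iff_colorable :
    chromOn G W ≤ k ↔ (G.toSimpleGraph.induce (W : Set (Fin n))).Colorable k := by
  simp only [chromOn, exists_nat_coloring_iff_colorable]
  refine ⟨fun h => ?_, fun h => Nat.sInf_le h⟩
  have hne : {k | (G.toSimpleGraph.induce (W : Set (Fin n))).Colorable k}.Nonempty :=
    ⟨_, SimpleGraph.colorable_of_fintype _⟩
  exact (Nat.sInf_mem hne : SimpleGraph.Colorable _ _).mono h

theorem cliqueNumOn_eq_cliqueNum :
    cliqueNumOn G W = (G.toSimpleGraph.induce (W : Set (Fin n))).cliqueNum := by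
  obtain ⟨T, hTW, hT, hcard⟩ := exists_isClique_card_eq_cliqueNum_induce G.toSimpleGraph W
  refine IsGreatest.csSup_eq ⟨⟨T, hTW, isClique_toSimpleGraph.1 hT, hcard⟩, ?_⟩
  rintro _ ⟨T', hTW', hT', rfl⟩
  exact card_le_cliqueNum_induce hTW' (isClique_toSimpleGraph.2 hT')

theorem isPerfect_iff_isPerfectOn_univ :
    IsPerfect G ↔ IsPerfectOn G.toSimpleGraph Finset.univ := by
  simp only [IsPerfect, IsPerfectOn, Finset.subset_univ, forall_const]
  refine forall_congr' fun W => ?_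
  rw [IsWeaklyPerfectOn, ← chromOn_le_iff_colorable, cliqueNumOn_eq_cliqueNum]
  refine ⟨le_of_eq, fun h => h.antisymm ((Nat.cast_le (α := ℕ∞)).1 ?_)⟩
  exact SimpleGraph.cliqueNum_le_chromaticNumber.trans
    (chromOn_le_iff_colorable.1 le_rfl).chromaticNumber_le

end ToSimpleGraph

section CoverIdeal

variable {n : ℕ} {K : Type*} [Field K] {G : GraphOn n} {s : ℕ} {R : Finset (Fin n)}

theorem multiColorable_sub_iff_exists_isVertexCover {V : Type*} [Finite V] [DecidableEq V]
    {H : SimpleGraph V} {m : V → ℕ} :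
    MultiColorable H (fun v => s - m v) s ↔ ∃ w : Fin s → Finset V,
      (∀ j, H.IsVertexCover (w j)) ∧ ∀ v, (Finset.univ.filter (v ∈ w ·)).card ≤ m v := by
  have := Fintype.ofFinite V
  constructor
  · rintro ⟨c, hc, hcm⟩
    refine ⟨fun j => Finset.univ.filter (j ∉ c ·), fun j u v huv => ?_, fun v => ?_⟩
    · have hdisj : j ∈ c u → j ∉ c v := fun h => Finset.disjoint_left.1 (hc u v huv) h
      simp only [Finset.coe_filter_univ, Set.mem_ofPred_eq]
      tauto
    · have hcard : s - m v ≤ (c v).card := hcm v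
      simp only [Finset.mem_filter_univ]
      rw [← Finset.compl_filter, Finset.filter_univ_mem, Finset.card_compl, Fintype.card_fin]
      omega
  · rintro ⟨w, hw, hwm⟩
    refine ⟨fun v => Finset.univ.filter (v ∉ w ·), fun u v huv => ?_, fun v => ?_⟩
    · rw [Finset.disjoint_left]
      intro j
      have := hw j huv
      simp only [Finset.mem_filter_univ, Finset.mem_coe] at this ⊢
      tauto
    · have := Finset.card_filter_add_card_filter_not (s := Finset.univ) (v ∈ w ·)
      have := hwm v
      simp only [Finset.card_univ, Fintype.card_fin] at *
      omega

theorem coverIdeal_pow_eq_span : coverIdeal K G ^ s =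
    Ideal.span ((fun e => monomial e (1 : K)) '' {e | ∃ w : Fin s → Finset (Fin n),
      (∀ j, IsCover G (w j)) ∧ e = ∑ j, ∑ i ∈ w j, Finsupp.single i 1}) := by
  have hprod (w : Fin s → Finset (Fin n)) : ∏ j, ∏ i ∈ w j, (X i : MvPolynomial (Fin n) K) =
      monomial (∑ j, ∑ i ∈ w j, Finsupp.single i 1) 1 := by
    simp only [monomial_sum_one]
    rfl
  rw [coverIdeal, Ideal.span, Submodule.span_pow]
  congr 1
  ext f
  rw [Set.mem_pow_iff_prod]
  constructor
  · rintro ⟨g, hg, rfl⟩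
    choose w hw hgw using hg
    exact ⟨_, ⟨w, hw, rfl⟩, by simp only [hgw, hprod]⟩
  · rintro ⟨_, ⟨w, hw, rfl⟩, rfl⟩
    exact ⟨fun j => ∏ i ∈ w j, X i, fun j => ⟨w j, hw j, rfl⟩, hprod w⟩

theorem mem_coverIdeal_pow_iff {f : MvPolynomial (Fin n) K} :
    f ∈ coverIdeal K G ^ s ↔
      ∀ m ∈ f.support, MultiColorable G.toSimpleGraph (fun i => s - m i) s := by
  rw [coverIdeal_pow_eq_span, mem_ideal_span_monomial_image]
  refine forall₂_congr fun m _ => ?_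
  rw [multiColorable_sub_iff_exists_isVertexCover]
  have hexp (w : Fin s → Finset (Fin n)) (i : Fin n) :
      (∑ j, ∑ i ∈ w j, Finsupp.single i 1 : Fin n →₀ ℕ) i =
        (Finset.univ.filter (i ∈ w ·)).card := by
    simp [Finsupp.finsetSum_apply, Finsupp.single_apply]
  simp only [isVertexCover_toSimpleGraph, ← hexp]
  constructor
  · rintro ⟨_, ⟨w, hw, rfl⟩, hm⟩
    exact ⟨w, hw, hm⟩
  · rintro ⟨w, hw, hm⟩
    exact ⟨_, ⟨w, hw, rfl⟩, hm⟩

theorem monomial_one_mem_coverIdeal_pow_iff {m : Fin n →₀ ℕ} :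
    monomial m (1 : K) ∈ coverIdeal K G ^ s ↔
      MultiColorable G.toSimpleGraph (fun i => s - m i) s := by
  classical
  simp [mem_coverIdeal_pow_iff, support_monomial]

theorem isMonomialIdeal_coverIdeal_pow : IsMonomialIdeal (coverIdeal K G ^ s) := fun _ hf m hm =>
  monomial_one_mem_coverIdeal_pow_iff.2 (mem_coverIdeal_pow_iff.1 hf m hm)

theorem exists_eq_varPrime_of_mem_associatedPrimes {P : Ideal (MvPolynomial (Fin n) K)}
    (hP : P ∈ associatedPrimes (MvPolynomial (Fin n) K)
      (MvPolynomial (Fin n) K ⧸ (coverIdeal K G ^ s))) :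
    ∃ R, P = varPrime K R := by
  classical
  obtain ⟨hprime, hcolon⟩ := mem_associatedPrimes_quotient_iff.1 hP
  refine ⟨Finset.univ.filter (X · ∈ P), ?_⟩
  rw [varPrime_eq_span_X_image, Finset.coe_filter_univ]
  exact (isMonomialIdeal_coverIdeal_pow.of_isPrime_colon hcolon).eq_span_X_image

theorem varPrime_eq_colon_monomial_iff {a : Fin n →₀ ℕ} :
    varPrime K R = (coverIdeal K G ^ s).colon {monomial a 1} ↔
      ∀ β : Fin n → ℕ, (∃ i ∈ R, β i ≠ 0) ↔
        MultiColorable G.toSimpleGraph (fun i => s - (β i + a i)) s := by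
  have hmem (f : MvPolynomial (Fin n) K) : f ∈ (coverIdeal K G ^ s).colon {monomial a 1} ↔
      ∀ m ∈ f.support, MultiColorable G.toSimpleGraph (fun i => s - (m i + a i)) s := by
    rw [Submodule.mem_colon_singleton, smul_eq_mul, mul_comm, mem_coverIdeal_pow_iff,
      support_monomial_one_mul, Finset.forall_mem_map]
    simp only [addLeftEmbedding_apply, Finsupp.add_apply, add_comm]
  classical
  simp only [varPrime_eq_span_X_image, Finsupp.equivFunOnFinite.surjective.forall,
    Finsupp.equivFunOnFinite_apply]
  constructor
  · intro h β
    have := hmem (monomial β 1)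
    rw [← h, monomial_one_mem_span_X_image_iff] at this
    simpa [support_monomial] using this
  · intro h
    ext f
    rw [mem_ideal_span_X_image, hmem]
    exact forall₂_congr fun m _ => h m

theorem varPrime_mem_associatedPrimes_iff :
    varPrime K R ∈ associatedPrimes (MvPolynomial (Fin n) K)
        (MvPolynomial (Fin n) K ⧸ (coverIdeal K G ^ s)) ↔
      ∃ b, IsCriticalWeight G.toSimpleGraph s R b := by
  rw [mem_associatedPrimes_quotient_iff, and_iff_right (isPrime_varPrime R)]
  constructor
  · intro h
    obtain ⟨a, ha⟩ := isMonomialIdeal_coverIdeal_pow.exists_eq_colon_monomial h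
    exact ⟨_, isCriticalWeight_of_forall_multiColorable_iff (varPrime_eq_colon_monomial_iff.1 ha)⟩
  · rintro ⟨b, hb⟩
    exact ⟨monomial (Finsupp.equivFunOnFinite.symm fun i => s - b i) 1,
      varPrime_eq_colon_monomial_iff.2 hb.exists_ne_zero_iff⟩

theorem coverIdeal_pow_le_varPrime_iff (hs : s ≠ 0) :
    coverIdeal K G ^ s ≤ varPrime K R ↔ ∃ e ∈ G.edges, e ⊆ R := by
  have hprod (w : Finset (Fin n)) :
      ∏ i ∈ w, (X i : MvPolynomial (Fin n) K) ∈ varPrime K R ↔ ∃ i ∈ w, i ∈ R := by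
    rw [(isPrime_varPrime R).prod_mem_iff]
    simp only [varPrime_eq_span_X_image, X_mem_span_X_image_iff, Finset.mem_coe]
  rw [(isPrime_varPrime R).pow_le_iff hs, coverIdeal, Ideal.span_le]
  constructor
  · intro h
    by_contra! hR
    have hcover : IsCover G Rᶜ := fun e he => by
      obtain ⟨i, hi, hiR⟩ := Finset.not_subset.1 (hR e he)
      exact ⟨i, Finset.mem_inter.2 ⟨Finset.mem_compl.2 hiR, hi⟩⟩
    obtain ⟨i, hi, hiR⟩ := (hprod Rᶜ).1 (h ⟨_, hcover, rfl⟩)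
    exact Finset.mem_compl.1 hi hiR
  · rintro ⟨e, he, heR⟩ _ ⟨w, hw, rfl⟩
    obtain ⟨i, hi⟩ := hw e he
    exact (hprod w).2 ⟨i, Finset.mem_of_mem_inter_left hi, heR (Finset.mem_of_mem_inter_right hi)⟩

theorem varPrime_mem_minimalPrimes_iff (hs : s ≠ 0) :
    varPrime K R ∈ (coverIdeal K G ^ s).minimalPrimes ↔ R ∈ G.edges := by
  constructor
  · intro h
    obtain ⟨e, he, heR⟩ := (coverIdeal_pow_le_varPrime_iff hs).1 h.1.2
    have hle := h.2 ⟨isPrime_varPrime e, (coverIdeal_pow_le_varPrime_iff hs).2 ⟨e, he, subset_rfl⟩⟩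
      (varPrime_le_varPrime_iff.2 heR)
    rwa [(varPrime_le_varPrime_iff.1 hle).antisymm heR]
  · intro hR
    obtain ⟨Q, hQ, hQR⟩ := Ideal.exists_minimalPrimes_le
      ((coverIdeal_pow_le_varPrime_iff (K := K) hs).2 ⟨R, hR, subset_rfl⟩)
    obtain ⟨R', rfl⟩ := exists_eq_varPrime_of_mem_associatedPrimes (K := K) (G := G) (s := s) <|
      Module.associatedPrimes.minimalPrimes_annihilator_subset_associatedPrimes _ _
        (by rwa [Ideal.annihilator_quotient])
    obtain ⟨e, he, heR'⟩ := (coverIdeal_pow_le_varPrime_iff hs).1 hQ.1.2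
    have hR'R := varPrime_le_varPrime_iff.1 hQR
    have heR : e = R := Finset.eq_of_subset_of_card_le (heR'.trans hR'R)
      (by rw [G.card_eq e he, G.card_eq R hR])
    rwa [hR'R.antisymm (heR ▸ heR')] at hQ

end CoverIdeal

section Perfect

variable {n : ℕ} {K : Type*} [Field K] {G : GraphOn n} {s : ℕ} {R W : Finset (Fin n)}

theorem varPrime_mem_associatedPrimes_iff_of_isPerfectOn (hR : IsPerfectOn G.toSimpleGraph R) :
    varPrime K R ∈ associatedPrimes (MvPolynomial (Fin n) K)
        (MvPolynomial (Fin n) K ⧸ (coverIdeal K G ^ s)) ↔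
      1 < R.card ∧ R.card ≤ s + 1 ∧ IsClique G R := by
  rw [varPrime_mem_associatedPrimes_iff, exists_isCriticalWeight_iff hR, isClique_toSimpleGraph]

theorem saturatedChainProperty_coverIdeal_pow (hG : IsPerfectOn G.toSimpleGraph Finset.univ)
    (hs : s ≠ 0) : SaturatedChainProperty (coverIdeal K G ^ s) := by
  have hass (R : Finset (Fin n)) := varPrime_mem_associatedPrimes_iff_of_isPerfectOn (K := K)
    (s := s) (hG.mono R.subset_univ)
  intro P hP hmin
  obtain ⟨R, rfl⟩ := exists_eq_varPrime_of_mem_associatedPrimes hP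
  obtain ⟨h1, hs1, hR⟩ := (hass R).1 hP
  rw [varPrime_mem_minimalPrimes_iff hs, mem_edges_iff_card_eq_two_and_isClique] at hmin
  have h2 : R.card ≠ 2 := fun h => hmin ⟨h, hR⟩
  obtain ⟨v, hv⟩ := Finset.card_pos.1 (zero_lt_one.trans h1)
  have hcard := Finset.card_erase_add_one hv
  have hclique : IsClique G (R.erase v) := fun a ha b hb =>
    hR a (Finset.mem_of_mem_erase ha) b (Finset.mem_of_mem_erase hb)
  refine ⟨varPrime K (R.erase v), (hass _).2 ⟨by omega, by omega, hclique⟩,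
    varPrime_lt_varPrime_iff.2 (Finset.erase_ssubset hv), ?_⟩
  rw [primeHeight_varPrime, primeHeight_varPrime, ← hcard, Nat.cast_add_one]

theorem varPrime_mem_associatedPrimes_of_minimal
    (hW : Minimal (¬ IsWeaklyPerfectOn G.toSimpleGraph ·) W) :
    varPrime K W ∈ associatedPrimes (MvPolynomial (Fin n) K) (MvPolynomial (Fin n) K ⧸
      (coverIdeal K G ^ (G.toSimpleGraph.induce (W : Set (Fin n))).cliqueNum)) :=
  varPrime_mem_associatedPrimes_iff.2 ⟨_, isCriticalWeight_indicator_of_minimal hW⟩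

theorem not_saturatedChainProperty_of_minimal
    (hW : Minimal (¬ IsWeaklyPerfectOn G.toSimpleGraph ·) W) :
    ¬ SaturatedChainProperty
      (coverIdeal K G ^ (G.toSimpleGraph.induce (W : Set (Fin n))).cliqueNum) := by
  intro h
  have hmin : W ∉ G.edges := fun hWe => not_isClique_of_minimal hW <|
    isClique_toSimpleGraph.2 (mem_edges_iff_card_eq_two_and_isClique.1 hWe).2
  rw [← varPrime_mem_minimalPrimes_iff (K := K)
    (Nat.one_le_iff_ne_zero.1 (one_le_cliqueNum_of_minimal hW))] at hmin
  obtain ⟨Q, hQ, hQW, hheight⟩ := h _ (varPrime_mem_associatedPrimes_of_minimal hW) hmin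
  obtain ⟨R, rfl⟩ := exists_eq_varPrime_of_mem_associatedPrimes hQ
  have hRW := varPrime_lt_varPrime_iff.1 hQW
  have hR : R.card ≤ (G.toSimpleGraph.induce (W : Set (Fin n))).cliqueNum :=
    card_le_cliqueNum_induce hRW.subset <| isClique_toSimpleGraph.2
      ((varPrime_mem_associatedPrimes_iff_of_isPerfectOn
        (isPerfectOn_of_ssubset_minimal hW hRW)).1 hQ).2.2
  rw [primeHeight_varPrime, primeHeight_varPrime] at hheight
  norm_cast at hheight
  have := cliqueNum_add_one_lt_card_of_minimal hW
  omega

theorem cliqueNum_induce_lt_chromOn_univ (hW : ¬ IsWeaklyPerfectOn G.toSimpleGraph W) :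
    (G.toSimpleGraph.induce (W : Set (Fin n))).cliqueNum < chromOn G Finset.univ := by
  by_contra! hle
  exact hW <| (chromOn_le_iff_colorable.1 hle).of_hom
    (G.toSimpleGraph.induceHomOfLE (Finset.coe_subset.2 W.subset_univ)).toHom

end Perfect

/-- For a finite simple graph `G` with cover ideal `J = J(G)`, the
following are equivalent: (1) `G` is perfect; (2) for all `1 ≤ s < χ(G)`, a monomial
prime `P = (x_i : i ∈ R)` is associated to `S/J^s` iff the induced subgraph on `R` is a
clique of size `1 < |R| ≤ s + 1`; (3) for all `s ≥ 1`, `J^s` has the saturated chain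
property for associated primes. -/
theorem perfect_tfae {n : ℕ} (K : Type*) [Field K] (G : GraphOn n) :
    [ IsPerfect G,
      ∀ s : ℕ, 1 ≤ s → s < chromOn G Finset.univ →
        ∀ R : Finset (Fin n),
          (varPrime K R ∈ associatedPrimes (MvPolynomial (Fin n) K)
              (MvPolynomial (Fin n) K ⧸ (coverIdeal K G ^ s)) ↔
            (1 < R.card ∧ R.card ≤ s + 1 ∧ IsClique G R)),
      ∀ s : ℕ, 1 ≤ s → SaturatedChainProperty (coverIdeal K G ^ s) ].TFAE := by
  rw [isPerfect_iff_isPerfectOn_univ]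
  tfae_have 1 → 2 := fun h s _ _ R =>
    varPrime_mem_associatedPrimes_iff_of_isPerfectOn (h.mono R.subset_univ)
  tfae_have 1 → 3 := fun h s hs =>
    saturatedChainProperty_coverIdeal_pow h (Nat.one_le_iff_ne_zero.1 hs)
  tfae_have 2 → 1 := by
    intro h
    by_contra hG
    obtain ⟨W, hW⟩ := exists_minimal_not_isWeaklyPerfectOn hG
    obtain ⟨-, -, hclique⟩ := (h _ (one_le_cliqueNum_of_minimal hW)
      (cliqueNum_induce_lt_chromOn_univ hW.prop) W).1 (varPrime_mem_associatedPrimes_of_minimal hW)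
    exact not_isClique_of_minimal hW (isClique_toSimpleGraph.2 hclique)
  tfae_have 3 → 1 := by
    intro h
    by_contra hG
    obtain ⟨W, hW⟩ := exists_minimal_not_isWeaklyPerfectOn hG
    exact not_saturatedChainProperty_of_minimal hW (h _ (one_le_cliqueNum_of_minimal hW))
  tfae_finish
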